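/- Let k ≥ 0 and let G be a connected (k+1)-regular graph on n vertices. If every edge of G lies in at least 2n − 2k − 5 triangles, then G ∈ D̂_k. -/

import Mathlib

open SimpleGraph

/-- The degree of a vertex in a finite simple graph. -/
noncomputable def degC {V : Type} [Fintype V] (G : SimpleGraph V) (v : V) : ℕ := by
  classical exact G.degree v

/-- The minimum degree of a finite simple graph. -/
noncomputable def minDegC {V : Type} [Fintype V] (G : SimpleGraph V) : ℕ := by
  classical exact G.minDegree

/-- `H` is a minor of `G`: there is a family of nonempty, pairwise disjoint,
connected branch sets, one for each vertex of `H`, such that every edge of `H`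
is realised by an edge of `G` between the corresponding branch sets. -/
def IsMinorOf {W V : Type} (H : SimpleGraph W) (G : SimpleGraph V) : Prop :=
  ∃ B : W → Set V,
    (∀ w, (B w).Nonempty) ∧
    (∀ u w : W, u ≠ w → Disjoint (B u) (B w)) ∧
    (∀ w, (G.induce (B w)).Connected) ∧
    (∀ ⦃u w : W⦄, H.Adj u w → ∃ a ∈ B u, ∃ b ∈ B w, G.Adj a b)

/-- `H` is a proper minor of `G`: a minor that is not isomorphic to `G`. -/
def IsProperMinorOf {W V : Type} (H : SimpleGraph W) (G : SimpleGraph V) : Prop :=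
  IsMinorOf H G ∧ ¬ Nonempty (H ≃g G)

/-- `G ∈ D_k`: every minor of `G` has minimum degree at most `k`. -/
def MemD (k : ℕ) {V : Type} (G : SimpleGraph V) : Prop :=
  ∀ (W : Type) [Fintype W] (H : SimpleGraph W), IsMinorOf H G → minDegC H ≤ k

/-- `G ∈ D̂_k`: `G ∉ D_k` but every proper minor of `G` is in `D_k`. -/
def MemDHat (k : ℕ) {V : Type} (G : SimpleGraph V) : Prop :=
  ¬ MemD k G ∧ ∀ (W : Type) [Fintype W] (H : SimpleGraph W), IsProperMinorOf H G → MemD k H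

/-!
Let `M` be a minor of `G` of minimum degree at least `d = k + 1`. A vertex `x` forming a branch set
`{x}` has `d` neighbours, and they are spread over at least `d` different branch sets, so no branch
set contains two of them. Hence, if an edge `ab` of `G` lay inside a branch set, neither `a`, `b`
nor any common neighbour of `a` and `b` would form a branch set. Since `M` has at least `d + 1`
vertices, counting the vertices of `G` bounds the number of triangles on `ab` below the hypothesis.
So all branch sets are singletons, and `M` embeds in `G` bijectively on neighbourhoods, hence onto
the connected graph `G`. If `M` is a minor of a minor `H` of `G`, then `G` is in turn a minor of
`H`, and `H ≅ G` since mutual minors of finite graphs are isomorphic.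
-/

section Cardinality

variable {ι α : Type*} [Fintype ι] [Finite α] {s : ι → Set α} {t : Set α}

theorem sum_ncard_le_ncard_of_pairwise_disjoint (hs : Pairwise (Function.onFun Disjoint s))
    (hst : ∀ i, s i ⊆ t) : ∑ i, (s i).ncard ≤ t.ncard := by
  rw [← finsum_eq_sum_of_fintype, ← Set.ncard_iUnion_of_finite (fun i => Set.toFinite _) hs]
  exact Set.ncard_le_ncard (Set.iUnion_subset hst)

theorem two_mul_card_add_ncard_le_of_pairwise_disjoint
    (hne : ∀ i, (s i).Nonempty) (hs : Pairwise (Function.onFun Disjoint s))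
    (ht : ∀ i, ∀ x ∈ t, s i ≠ {x}) : 2 * Fintype.card ι + t.ncard ≤ 2 * Nat.card α := by
  -- A singleton is disjoint from `t`, so it counts in both sums; other sets have two elements.
  have two_le (i : ι) : 2 ≤ (s i).ncard + (s i \ t).ncard := by
    have hpos : 0 < (s i).ncard := (hne i).ncard_pos
    obtain hone | htwo := (Nat.succ_le_of_lt hpos).eq_or_lt
    · obtain ⟨x, hx⟩ := Set.ncard_eq_one.1 hone.symm
      have hxt : x ∉ t := fun hxt => ht i x hxt hx
      rw [hx, (Set.disjoint_singleton_left.2 hxt).sdiff_eq_left, Set.ncard_singleton]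
    · omega
  have hdiff : Pairwise (Function.onFun Disjoint fun i => s i \ t) :=
    hs.mono fun _ _ h => h.mono Set.sdiff_subset Set.sdiff_subset
  have hcount : 2 * Fintype.card ι ≤ Nat.card α + tᶜ.ncard :=
    calc 2 * Fintype.card ι = ∑ _i : ι, 2 := by simp [mul_comm]
      _ ≤ ∑ i, ((s i).ncard + (s i \ t).ncard) := Finset.sum_le_sum fun i _ => two_le i
      _ = ∑ i, (s i).ncard + ∑ i, (s i \ t).ncard := Finset.sum_add_distrib
      _ ≤ (Set.univ : Set α).ncard + tᶜ.ncard :=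
        add_le_add (sum_ncard_le_ncard_of_pairwise_disjoint hs fun i => Set.subset_univ _)
          (sum_ncard_le_ncard_of_pairwise_disjoint hdiff fun _ _ hx => hx.2)
      _ = Nat.card α + tᶜ.ncard := by rw [Set.ncard_univ]
  have := Set.ncard_add_ncard_compl t
  omega

end Cardinality

section Connectivity

variable {U V : Type*} {H : SimpleGraph U} {G : SimpleGraph V}

theorem connected_induce_iUnion {B : U → Set V} (hH : H.Connected)
    (hconn : ∀ u, (G.induce (B u)).Connected)
    (hadj : ∀ ⦃u w : U⦄, H.Adj u w → ∃ a ∈ B u, ∃ b ∈ B w, G.Adj a b) :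
    (G.induce (⋃ u, B u)).Connected := by
  have within {u : U} {a b : V} (ha : a ∈ B u) (hb : b ∈ B u) :
      (G.induce (⋃ u, B u)).Reachable ⟨a, Set.mem_iUnion_of_mem u ha⟩
        ⟨b, Set.mem_iUnion_of_mem u hb⟩ :=
    ((hconn u).preconnected ⟨a, ha⟩ ⟨b, hb⟩).map
      (induceHomOfLE G (Set.subset_iUnion B u)).toHom
  have along {u v : U} (p : H.Walk u v) : ∀ {a b : V} (ha : a ∈ B u) (hb : b ∈ B v),
      (G.induce (⋃ u, B u)).Reachable ⟨a, Set.mem_iUnion_of_mem u ha⟩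
        ⟨b, Set.mem_iUnion_of_mem v hb⟩ := by
    induction p with
    | nil => exact within
    | @cons u w v huw _ ih =>
      intro a b ha hb
      obtain ⟨c, hc, d, hd, hcd⟩ := hadj huw
      have cross : (G.induce (⋃ u, B u)).Adj ⟨c, Set.mem_iUnion_of_mem u hc⟩
          ⟨d, Set.mem_iUnion_of_mem w hd⟩ := hcd
      exact (within ha hc).trans (cross.reachable.trans (ih hd hb))
  obtain ⟨u⟩ := hH.nonempty
  obtain ⟨a⟩ := (hconn u).nonempty
  refine (connected_iff_exists_forall_reachable _).2 ⟨⟨a, Set.mem_iUnion_of_mem u a.2⟩, ?_⟩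
  rintro ⟨b, hb⟩
  obtain ⟨v, hbv⟩ := Set.mem_iUnion.1 hb
  obtain ⟨p⟩ := hH.preconnected u v
  exact along p a.2 hbv

theorem subsingleton_of_preconnected_induce_of_isIndepSet {s : Set V}
    (hconn : (G.induce s).Preconnected) (hindep : G.IsIndepSet s) : s.Subsingleton := by
  by_contra hnt
  have : Nontrivial s := (Set.not_subsingleton_iff.1 hnt).coe_sort
  obtain ⟨a⟩ : Nonempty s := inferInstance
  obtain ⟨b, hab⟩ := hconn.exists_adj_of_nontrivial a
  exact hindep a.2 b.2 (Subtype.coe_ne_coe.2 hab.ne) hab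

theorem nonempty_iso_of_copy_of_degree_le [Nonempty U] [H.LocallyFinite] [G.LocallyFinite]
    (f : Copy H G) (hG : G.Preconnected) (hdeg : ∀ u, G.degree (f u) ≤ H.degree u) :
    Nonempty (H ≃g G) := by
  have lift {u : U} {y : V} (hy : G.Adj (f u) y) : ∃ v, H.Adj u v ∧ f v = y := by
    have hcard : Nat.card (G.neighborSet (f u)) ≤ Nat.card (H.neighborSet u) := by
      simpa only [Nat.card_eq_fintype_card, card_neighborSet_eq_degree] using hdeg u
    obtain ⟨v, hv⟩ := ((f.mapNeighborSet u).injective.bijective_of_nat_card_le hcard).2 ⟨y, hy⟩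
    exact ⟨v, v.2, congrArg Subtype.val hv⟩
  have hsurj : Function.Surjective f := by
    intro y
    obtain ⟨u⟩ := ‹Nonempty U›
    obtain ⟨p⟩ := hG (f u) y
    have walk_end {x y : V} (p : G.Walk x y) : x ∈ Set.range f → y ∈ Set.range f := by
      induction p with
      | nil => exact id
      | cons hxz _ ih =>
        rintro ⟨v, rfl⟩
        obtain ⟨z, _, hz⟩ := lift hxz
        exact ih ⟨z, hz⟩
    exact walk_end p ⟨u, rfl⟩
  have hf : Function.Bijective f := ⟨f.injective, hsurj⟩
  refine ⟨⟨Equiv.ofBijective f hf, fun {u v} => ⟨fun huv => ?_, f.toHom.map_adj⟩⟩⟩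
  obtain ⟨w, huw, hw⟩ := lift huv
  exact f.injective hw ▸ huw

theorem copy_self_adj_iff [Finite U] (f : Copy H H) {u v : U} :
    H.Adj (f u) (f v) ↔ H.Adj u v := by
  refine ⟨fun huv => ?_, f.toHom.map_adj⟩
  obtain ⟨⟨e, he⟩, hfe⟩ :=
    Finite.surjective_of_injective f.mapEdgeSet.injective ⟨s(f u, f v), huv⟩
  have hmap : e.map f = s(u, v).map f := congrArg Subtype.val hfe
  obtain rfl : e = s(u, v) := Sym2.map.injective f.injective hmap
  exact he

theorem nonempty_iso_of_isContained_of_isContained [Finite U] (hHG : H ⊑ G) (hGH : G ⊑ H) :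
    Nonempty (H ≃g G) := by
  obtain ⟨f⟩ := hHG
  obtain ⟨g⟩ := hGH
  have hgf : Function.Surjective (g ∘ f) :=
    Finite.surjective_of_injective (g.injective.comp f.injective)
  have hf : Function.Bijective f := ⟨f.injective, hgf.of_comp_left g.injective⟩
  refine ⟨⟨Equiv.ofBijective f hf, fun {u v} => ⟨fun huv => ?_, f.toHom.map_adj⟩⟩⟩
  exact (copy_self_adj_iff (g.comp f)).1 (g.toHom.map_adj huv)

end Connectivity

/-- `B` is a model of `H` in `G`: the sets `B w` are the branch sets witnessing that `H` is a minor
of `G`. They are nonempty because `SimpleGraph.Connected` includes nonemptiness. -/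
structure IsMinorModel {W V : Type*} (B : W → Set V) (H : SimpleGraph W) (G : SimpleGraph V) :
    Prop where
  disjoint : Pairwise (Function.onFun Disjoint B)
  connected (w : W) : (G.induce (B w)).Connected
  exists_adj ⦃u w : W⦄ : H.Adj u w → ∃ a ∈ B u, ∃ b ∈ B w, G.Adj a b

namespace IsMinorModel

variable {U W V : Type*} {M : SimpleGraph U} {H : SimpleGraph W} {G : SimpleGraph V}
  {B : W → Set V} {C : U → Set W}

theorem nonempty (hB : IsMinorModel B H G) (w : W) : (B w).Nonempty :=
  Set.nonempty_coe_sort.1 (hB.connected w).nonempty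

theorem eq_of_mem (hB : IsMinorModel B H G) {u w : W} {x : V} (hu : x ∈ B u) (hw : x ∈ B w) :
    u = w :=
  hB.disjoint.eq (Set.not_disjoint_iff.2 ⟨x, hu, hw⟩)

theorem of_copy (f : Copy H G) : IsMinorModel (fun w => {f w}) H G where
  disjoint _ _ huw := Set.disjoint_singleton.2 (f.injective.ne huw)
  connected _ := ⟨Preconnected.of_subsingleton⟩
  exists_adj u w huw := ⟨f u, rfl, f w, rfl, f.toHom.map_adj huw⟩

theorem trans (hC : IsMinorModel C M H) (hB : IsMinorModel B H G) :
    IsMinorModel (fun u => ⋃ w : C u, B w) M G where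
  disjoint u v huv := by
    simp only [Function.onFun, Set.disjoint_iUnion_left, Set.disjoint_iUnion_right]
    exact fun w w' => hB.disjoint ((hC.disjoint huv).ne_of_mem w'.2 w.2)
  connected u := connected_induce_iUnion (hC.connected u) (fun w => hB.connected w)
    fun _ _ hadj => hB.exists_adj hadj
  exists_adj u v huv := by
    obtain ⟨w, hw, w', hw', hww'⟩ := hC.exists_adj huv
    obtain ⟨a, ha, b, hb, hab⟩ := hB.exists_adj hww'
    exact ⟨a, Set.mem_iUnion_of_mem ⟨w, hw⟩ ha, b, Set.mem_iUnion_of_mem ⟨w', hw'⟩ hb, hab⟩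

theorem exists_embedding_mem (hB : IsMinorModel B H G) : ∃ f : W ↪ V, ∀ w, f w ∈ B w := by
  choose f hf using hB.nonempty
  exact ⟨⟨f, fun u w huw => hB.eq_of_mem (hf u) (huw ▸ hf w)⟩, hf⟩

theorem isContained_of_subsingleton (hB : IsMinorModel B H G) (hs : ∀ w, (B w).Subsingleton) :
    H ⊑ G := by
  obtain ⟨f, hf⟩ := hB.exists_embedding_mem
  refine ⟨⟨⟨f, fun {u w} huw => ?_⟩, f.injective⟩⟩
  obtain ⟨a, ha, b, hb, hab⟩ := hB.exists_adj huw
  rwa [hs u (hf u) ha, hs w (hf w) hb]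

theorem subsingleton_of_card_le [Finite V] (hB : IsMinorModel B H G)
    (hcard : Nat.card V ≤ Nat.card W) (w : W) : (B w).Subsingleton := by
  obtain ⟨f, hf⟩ := hB.exists_embedding_mem
  have hsurj : Function.Surjective f := (f.injective.bijective_of_nat_card_le hcard).2
  have eq_rep {y : V} (hy : y ∈ B w) : y = f w := by
    obtain ⟨v, rfl⟩ := hsurj y
    rw [hB.eq_of_mem (hf v) hy]
  exact fun y hy z hz => (eq_rep hy).trans (eq_rep hz).symm

theorem subsingleton_neighborSet_inter [H.LocallyFinite] [G.LocallyFinite]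
    (hB : IsMinorModel B H G) {w : W} {x : V} (hw : B w = {x})
    (hdeg : G.degree x ≤ H.degree w) (u : W) : (G.neighborSet x ∩ B u).Subsingleton := by
  have hex (v : H.neighborSet w) : ∃ y : G.neighborSet x, (y : V) ∈ B v := by
    obtain ⟨a, ha, b, hb, hab⟩ := hB.exists_adj v.2
    obtain rfl : a = x := by simpa [hw] using ha
    exact ⟨⟨b, hab⟩, hb⟩
  choose f hf using hex
  have hinj : Function.Injective f := fun v v' hvv' =>
    Subtype.ext (hB.eq_of_mem (hf v) (hvv' ▸ hf v'))
  have hcard : Nat.card (G.neighborSet x) ≤ Nat.card (H.neighborSet w) := by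
    simpa only [Nat.card_eq_fintype_card, card_neighborSet_eq_degree] using hdeg
  have hsurj : Function.Surjective f := (hinj.bijective_of_nat_card_le hcard).2
  rintro y ⟨hxy, hyu⟩ z ⟨hxz, hzu⟩
  obtain ⟨v, hv⟩ := hsurj ⟨y, hxy⟩
  obtain ⟨v', hv'⟩ := hsurj ⟨z, hxz⟩
  obtain rfl : f v = y := congrArg Subtype.val hv
  obtain rfl : f v' = z := congrArg Subtype.val hv'
  have hvv' : (v : W) = v' := (hB.eq_of_mem (hf v) hyu).trans (hB.eq_of_mem hzu (hf v'))
  rw [Subtype.ext hvv']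

theorem two_mul_card_add_ncard_commonNeighbors_add_two_le [Fintype W] [Finite V]
    [H.LocallyFinite] [G.LocallyFinite] (hB : IsMinorModel B H G)
    (hdeg : ∀ w x, G.degree x ≤ H.degree w) {w : W} {a b : V} (ha : a ∈ B w) (hb : b ∈ B w)
    (hab : G.Adj a b) :
    2 * Fintype.card W + (G.commonNeighbors a b).ncard + 2 ≤ 2 * Nat.card V := by
  have not_singleton {x y z : V} (hx : x ∈ B w) (hy : y ∈ B w) (hxy : x ≠ y) (hz : z ∈ B w)
      (v : W) : B v ≠ {z} := by
    intro hv
    obtain rfl : v = w := hB.eq_of_mem (hv ▸ rfl) hz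
    exact hxy ((hv ▸ Set.subsingleton_singleton : (B v).Subsingleton) hx hy)
  have hT : ∀ v, ∀ x ∈ insert a (insert b (G.commonNeighbors a b)), B v ≠ {x} := by
    rintro v x (rfl | rfl | ⟨hax, hbx⟩)
    · exact not_singleton ha hb hab.ne ha v
    · exact not_singleton ha hb hab.ne hb v
    · exact fun hv => hab.ne (hB.subsingleton_neighborSet_inter hv (hdeg v x) w
        ⟨hax.symm, ha⟩ ⟨hbx.symm, hb⟩)
  have hcount := two_mul_card_add_ncard_le_of_pairwise_disjoint hB.nonempty hB.disjoint hT
  have hb_notMem : b ∉ G.commonNeighbors a b := G.notMem_commonNeighbors_right a b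
  have ha_notMem : a ∉ insert b (G.commonNeighbors a b) :=
    (Set.mem_insert_iff.trans (or_iff_left (G.notMem_commonNeighbors_left a b))).not.2 hab.ne
  rw [Set.ncard_insert_of_notMem ha_notMem, Set.ncard_insert_of_notMem hb_notMem] at hcount
  omega

theorem nonempty_iso_of_two_mul_card_le [Fintype W] [Nonempty W] [Finite V]
    [DecidableRel H.Adj] [G.LocallyFinite] {d : ℕ} (hB : IsMinorModel B H G)
    (hG : G.Preconnected) (hGdeg : ∀ x, G.degree x ≤ d) (hHdeg : ∀ w, d ≤ H.degree w)
    (htri : ∀ a b, G.Adj a b → 2 * Nat.card V ≤ 2 * d + (G.commonNeighbors a b).ncard + 3) :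
    Nonempty (H ≃g G) := by
  have hdeg (w : W) (x : V) : G.degree x ≤ H.degree w := (hGdeg x).trans (hHdeg w)
  have hcard : d + 1 ≤ Fintype.card W := by
    obtain ⟨w⟩ := ‹Nonempty W›
    exact (hHdeg w).trans_lt (H.degree_lt_card_verts w)
  have hsub (w : W) : (B w).Subsingleton := by
    refine subsingleton_of_preconnected_induce_of_isIndepSet (hB.connected w).preconnected
      fun a ha b hb _ hab => ?_
    have := hB.two_mul_card_add_ncard_commonNeighbors_add_two_le hdeg ha hb hab
    have := htri a b hab
    omega
  obtain ⟨f⟩ := hB.isContained_of_subsingleton hsub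
  exact nonempty_iso_of_copy_of_degree_le f hG fun w => hdeg w (f w)

end IsMinorModel

section Minor

variable {U W V : Type} {M : SimpleGraph U} {H : SimpleGraph W} {G : SimpleGraph V}

theorem isMinorOf_iff_exists_isMinorModel : IsMinorOf H G ↔ ∃ B, IsMinorModel B H G :=
  ⟨fun ⟨B, _, hdisj, hconn, hadj⟩ => ⟨B, fun u w => hdisj u w, hconn, hadj⟩,
    fun ⟨B, hB⟩ => ⟨B, hB.nonempty, fun _ _ => @hB.disjoint _ _, hB.connected, hB.exists_adj⟩⟩

theorem isMinorOf_of_isContained (h : H ⊑ G) : IsMinorOf H G :=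
  h.elim fun f => isMinorOf_iff_exists_isMinorModel.2 ⟨_, .of_copy f⟩

theorem IsMinorOf.trans (hMH : IsMinorOf M H) (hHG : IsMinorOf H G) : IsMinorOf M G := by
  obtain ⟨C, hC⟩ := isMinorOf_iff_exists_isMinorModel.1 hMH
  obtain ⟨B, hB⟩ := isMinorOf_iff_exists_isMinorModel.1 hHG
  exact isMinorOf_iff_exists_isMinorModel.2 ⟨_, hC.trans hB⟩

theorem IsMinorOf.card_le [Finite V] (h : IsMinorOf H G) : Nat.card W ≤ Nat.card V := by
  obtain ⟨B, hB⟩ := isMinorOf_iff_exists_isMinorModel.1 h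
  obtain ⟨f, _⟩ := hB.exists_embedding_mem
  exact Nat.card_le_card_of_injective f f.injective

theorem IsMinorOf.isContained_of_card_le [Finite V] (h : IsMinorOf H G)
    (hcard : Nat.card V ≤ Nat.card W) : H ⊑ G := by
  obtain ⟨B, hB⟩ := isMinorOf_iff_exists_isMinorModel.1 h
  exact hB.isContained_of_subsingleton (hB.subsingleton_of_card_le hcard)

theorem IsMinorOf.antisymm [Finite W] [Finite V] (hHG : IsMinorOf H G) (hGH : IsMinorOf G H) :
    Nonempty (H ≃g G) :=
  nonempty_iso_of_isContained_of_isContained (hHG.isContained_of_card_le hGH.card_le)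
    (hGH.isContained_of_card_le hHG.card_le)

end Minor

section MinDegree

variable {V : Type} [Fintype V] {G : SimpleGraph V} {k : ℕ}

theorem nonempty_of_lt_minDegC (h : k < minDegC G) : Nonempty V := by
  by_contra hV
  rw [not_nonempty_iff] at hV
  simp [minDegC] at h

theorem le_minDegC_of_forall_le_degC [Nonempty V] (h : ∀ v, k ≤ degC G v) : k ≤ minDegC G := by
  classical exact le_minDegree_of_forall_le_degree _ _ h

theorem minDegC_le_degC (v : V) : minDegC G ≤ degC G v := by
  classical exact minDegree_le_degree _ _

theorem degC_eq_degree (v : V) [Fintype (G.neighborSet v)] : degC G v = G.degree v := by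
  unfold degC
  congr!

end MinDegree

/-- Lemma 5.1: if `G` is a connected `(k+1)`-regular graph on `n` vertices such
that every edge lies in at least `2n - 2k - 5` triangles, then `G ∈ D̂_k`. -/
theorem memDHat_of_many_triangles (k : ℕ) {V : Type} [Fintype V]
    (G : SimpleGraph V) (hconn : G.Connected)
    (hreg : ∀ v : V, degC G v = k + 1)
    (htri : ∀ v w : V, G.Adj v w →
      2 * (Fintype.card V : ℤ) - 2 * k - 5 ≤ ({x : V | G.Adj v x ∧ G.Adj w x}.ncard : ℤ)) :
    MemDHat k G := by
  classical
  have := hconn.nonempty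
  refine ⟨fun hG => ?_, fun W _ H ⟨hHG, hiso⟩ U _ M hMH => ?_⟩
  · have hle : minDegC G ≤ k := hG V G (isMinorOf_of_isContained .rfl)
    have hge : k + 1 ≤ minDegC G := le_minDegC_of_forall_le_degC fun v => (hreg v).ge
    omega
  by_contra! hM
  have := nonempty_of_lt_minDegC hM
  obtain ⟨D, hD⟩ := isMinorOf_iff_exists_isMinorModel.1 (hMH.trans hHG)
  obtain ⟨e⟩ : Nonempty (M ≃g G) := by
    refine hD.nonempty_iso_of_two_mul_card_le (d := k + 1) hconn.preconnected
      (fun v => ?_) (fun u => ?_) (fun a b hab => ?_)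
    · exact (degC_eq_degree (G := G) v ▸ hreg v).le
    · exact degC_eq_degree (G := M) u ▸ hM.trans_le (minDegC_le_degC u)
    · have htriab : _ ≤ ((G.commonNeighbors a b).ncard : ℤ) := htri a b hab
      rw [Nat.card_eq_fintype_card]
      omega
  exact hiso (hHG.antisymm ((isMinorOf_of_isContained e.isContained').trans hMH))
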